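/- If a compact set X ⊂ ℂ^N is simply coconnected (every zero-free continuous function on X has a continuous logarithm) and satisfies the generalized argument principle, then the polynomial hull of X equals its rational hull. -/

import Mathlib

open MvPolynomial

/-- The polynomial hull of a set `X ⊆ ℂ^N`. -/
def polyHull (N : ℕ) (X : Set (Fin N → ℂ)) : Set (Fin N → ℂ) :=
  {z | ∀ p : MvPolynomial (Fin N) ℂ,
    ‖eval z p‖ ≤ sSup ((fun x => ‖eval x p‖) '' X)}

/-- `X` satisfies the generalized argument principle: every polynomial having a
continuous logarithm on `X` has no zeros on the polynomial hull of `X`. -/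
def GenArgPrinciple (N : ℕ) (X : Set (Fin N → ℂ)) : Prop :=
  ∀ p : MvPolynomial (Fin N) ℂ,
    (∃ g : (Fin N → ℂ) → ℂ, ContinuousOn g X ∧ ∀ x ∈ X, eval x p = Complex.exp (g x)) →
    ∀ z ∈ polyHull N X, eval z p ≠ 0

/-- `Y` is simply coconnected: every zero-free continuous function on `Y` has a
continuous logarithm. -/
def SimplyCoconnected (N : ℕ) (Y : Set (Fin N → ℂ)) : Prop :=
  ∀ f : (Fin N → ℂ) → ℂ, ContinuousOn f Y → (∀ y ∈ Y, f y ≠ 0) →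
    ∃ g : (Fin N → ℂ) → ℂ, ContinuousOn g Y ∧ ∀ y ∈ Y, f y = Complex.exp (g y)

/-- The rational hull of a set `X ⊆ ℂ^N`:
`{z | every polynomial vanishing at z has a zero on X}`. -/
def ratHull (N : ℕ) (X : Set (Fin N → ℂ)) : Set (Fin N → ℂ) :=
  {z | ∀ p : MvPolynomial (Fin N) ℂ, eval z p = 0 → ∃ x ∈ X, eval x p = 0}

theorem bddAbove_image_of_isBounded_of_continuous {α β : Type*} [PseudoMetricSpace α]
    [ProperSpace α] [LinearOrder β] [TopologicalSpace β] [ClosedIciTopology β] [Nonempty β]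
    {s : Set α} (hs : Bornology.IsBounded s) {f : α → β} (hf : Continuous f) :
    BddAbove (f '' s) :=
  (hs.isCompact_closure.bddAbove_image hf.continuousOn).mono (Set.image_mono subset_closure)

section Hulls

variable {N : ℕ} {X Y : Set (Fin N → ℂ)}

theorem GenArgPrinciple.polyHull_subset_ratHull (hX : GenArgPrinciple N X)
    (hY : SimplyCoconnected N Y) (hXY : X ⊆ Y) : polyHull N X ⊆ ratHull N Y := by
  intro z hz p hpz
  by_contra! hp
  obtain ⟨g, hg, hpg⟩ := hY (fun y ↦ eval y p) p.continuous_eval.continuousOn hp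
  exact hX p ⟨g, hg.mono hXY, fun x hx ↦ hpg x (hXY hx)⟩ z hz hpz

theorem exists_eval_eq_of_mem_ratHull {z : Fin N → ℂ} (hz : z ∈ ratHull N X)
    (p : MvPolynomial (Fin N) ℂ) : ∃ x ∈ X, eval x p = eval z p := by
  obtain ⟨x, hx, hpx⟩ := hz (p - C (eval z p)) (by simp)
  exact ⟨x, hx, by simpa [sub_eq_zero] using hpx⟩

theorem ratHull_subset_polyHull (hX : Bornology.IsBounded X) : ratHull N X ⊆ polyHull N X := by
  intro z hz p
  obtain ⟨x, hx, hxz⟩ := exists_eval_eq_of_mem_ratHull hz p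
  have hbdd : BddAbove ((fun x ↦ ‖eval x p‖) '' X) :=
    bddAbove_image_of_isBounded_of_continuous hX p.continuous_eval.norm
  rw [← hxz]
  exact le_csSup hbdd (Set.mem_image_of_mem _ hx)

theorem stmt16_general (hX : Bornology.IsBounded X) (hscc : SimplyCoconnected N X)
    (hgap : GenArgPrinciple N X) : polyHull N X = ratHull N X :=
  (hgap.polyHull_subset_ratHull hscc subset_rfl).antisymm (ratHull_subset_polyHull hX)

end Hulls

/-- If a compact set `X ⊆ ℂ^N` is simply coconnected and satisfies the generalized
argument principle, then its polynomial hull equals its rational hull. -/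
theorem stmt16 (N : ℕ) (X : Set (Fin N → ℂ)) (hX : IsCompact X)
    (hscc : SimplyCoconnected N X) (hgap : GenArgPrinciple N X) :
    polyHull N X = ratHull N X :=
  stmt16_general hX.isBounded hscc hgap
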